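/- Reduction from continuous guarding to one-sided vertex guarding: let a piecewise-linear terrain be given by a strictly increasing map x : Fin (n+1) → ℝ (the vertex abscissae, with vertex set V = { x i : i }) and a function f : ℝ → ℝ that is affine on each interval [x i, x (i+1)]. Let A* ⊆ [x 0, x n] be a finite set such that every t ∈ [x 0, x n] is seen by some g ∈ A*. Then there exist sets A_L ⊆ V and A_R ⊆ V with |A_L| + |A_R| ≤ 2·|A*| such that every t ∈ [x 0, x n] with t ∉ V is seen from the left by some v ∈ A_L or from the right by some v ∈ A_R. -/

import Mathlib

/-- `a` sees `b` on the terrain `f`. -/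
def Sees (f : ℝ → ℝ) (a b : ℝ) : Prop :=
  ∀ t ∈ Set.Icc (0:ℝ) 1, f ((1 - t) * a + t * b) ≤ (1 - t) * f a + t * f b

/-!
A guard `g` inside an edge `[p, q]` is replaced by `p` as a left guard and `q` as a right guard; a
guard at a vertex serves as both. Suppose `g` sees a point `t` beyond `q`. Then `q` lies below the
chord from `g` to `t`, and since the terrain is convex over the edge, `g` lies below the chord from
`p` to `q`; hence `g` lies below the chord from `p` to `t`. As `p` sees `g` and `g` sees `t`, the
terrain stays below the broken line `p`–`g`–`t`, which in turn lies below that chord,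
so `p` sees `t`. Up to `q` convexity alone gives this, and points left of `g` are symmetric.
-/

open Set

/-- The point of the graph of `f` at `b` lies on or below the chord joining those at `a` and `c`,
written without denominators; this reading is valid for `a < c`. -/
def BelowChord (f : ℝ → ℝ) (a b c : ℝ) : Prop :=
  (c - a) * f b ≤ (c - b) * f a + (b - a) * f c

/-- Over `S`, the terrain `f` consists of vertices from `V` and of convex arcs between vertices:
every point of `S` is a vertex or lies strictly inside an edge over which `f` is convex. -/
def PiecewiseConvexOn (V S : Set ℝ) (f : ℝ → ℝ) : Prop :=
  ∀ g ∈ S, g ∈ V ∨ ∃ p ∈ V, ∃ q ∈ V, g ∈ Ioo p q ∧ ConvexOn ℝ (Icc p q) f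

section

variable {f : ℝ → ℝ} {a b c d : ℝ}

namespace BelowChord

lemma extend_right (hab : a ≤ b) (hbc : b < c) (hcd : c ≤ d)
    (habc : BelowChord f a b c) (hbcd : BelowChord f b c d) : BelowChord f a b d := by
  unfold BelowChord at *
  refine le_of_mul_le_mul_left ?_ (sub_pos.2 hbc)
  linarith [mul_le_mul_of_nonneg_left habc (sub_nonneg.2 (hbc.le.trans hcd)),
    mul_le_mul_of_nonneg_left hbcd (sub_nonneg.2 hab)]

lemma extend_left (hab : a ≤ b) (hbc : b < c) (hcd : c ≤ d)
    (habc : BelowChord f a b c) (hbcd : BelowChord f b c d) : BelowChord f a c d := by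
  unfold BelowChord at *
  refine le_of_mul_le_mul_left ?_ (sub_pos.2 hbc)
  linarith [mul_le_mul_of_nonneg_left habc (sub_nonneg.2 hcd),
    mul_le_mul_of_nonneg_left hbcd (sub_nonneg.2 (hab.trans hbc.le))]

lemma trans_right (hab : a ≤ b) (hac : a < c) (hcd : c ≤ d)
    (habc : BelowChord f a b c) (hacd : BelowChord f a c d) : BelowChord f a b d := by
  unfold BelowChord at *
  refine le_of_mul_le_mul_left ?_ (sub_pos.2 hac)
  linarith [mul_le_mul_of_nonneg_left habc (sub_nonneg.2 (hac.le.trans hcd)),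
    mul_le_mul_of_nonneg_left hacd (sub_nonneg.2 hab)]

lemma trans_left (hab : a ≤ b) (hbd : b < d) (hcd : c ≤ d)
    (habd : BelowChord f a b d) (hbcd : BelowChord f b c d) : BelowChord f a c d := by
  unfold BelowChord at *
  refine le_of_mul_le_mul_left ?_ (sub_pos.2 hbd)
  linarith [mul_le_mul_of_nonneg_left hbcd (sub_nonneg.2 (hab.trans hbd.le)),
    mul_le_mul_of_nonneg_left habd (sub_nonneg.2 hcd)]

end BelowChord

namespace Sees

lemma symm (h : Sees f a b) : Sees f b a := by
  intro t ht
  have hswap := h (1 - t) (Icc.mem_iff_one_sub_mem.1 ht)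
  rwa [sub_sub_cancel, add_comm, add_comm (t * f a)] at hswap

lemma of_convexOn (hab : a ≤ b) (hf : ConvexOn ℝ (Icc a b) f) : Sees f a b := fun t ht =>
  hf.2 (left_mem_Icc.2 hab) (right_mem_Icc.2 hab) (sub_nonneg.2 ht.2) ht.1 (sub_add_cancel 1 t)

lemma belowChord {s : ℝ} (h : Sees f a b) (hab : a < b) (hs : s ∈ Icc a b) :
    BelowChord f a s b := by
  have hpos : 0 < b - a := sub_pos.2 hab
  have hparam := h ((s - a) / (b - a))
    ⟨div_nonneg (sub_nonneg.2 hs.1) hpos.le, (div_le_one hpos).2 (by linarith [hs.2])⟩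
  have habscissa : (1 - (s - a) / (b - a)) * a + (s - a) / (b - a) * b = s := by
    field_simp
    ring
  rw [habscissa] at hparam
  calc (b - a) * f s
      ≤ (b - a) * ((1 - (s - a) / (b - a)) * f a + (s - a) / (b - a) * f b) := by gcongr
    _ = (b - s) * f a + (s - a) * f b := by
      field_simp
      ring

lemma of_belowChord (hab : a < b) (h : ∀ s ∈ Icc a b, BelowChord f a s b) : Sees f a b := by
  intro t ht
  have hpos : 0 < b - a := sub_pos.2 hab
  have hmem : (1 - t) * a + t * b ∈ Icc a b :=
    convex_Icc a b (left_mem_Icc.2 hab.le) (right_mem_Icc.2 hab.le)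
      (sub_nonneg.2 ht.2) ht.1 (sub_add_cancel 1 t)
  refine le_of_mul_le_mul_left ((h _ hmem).trans_eq ?_) hpos
  ring

lemma trans_of_belowChord (hab : a < b) (hbc : b < c) (h₁ : Sees f a b) (h₂ : Sees f b c)
    (hb : BelowChord f a b c) : Sees f a c := by
  refine of_belowChord (hab.trans hbc) fun s hs => ?_
  rcases le_total s b with hsb | hbs
  · exact (h₁.belowChord hab ⟨hs.1, hsb⟩).trans_right hs.1 hab hbc.le hb
  · exact hb.trans_left hab.le hbc hs.2 (h₂.belowChord hbc ⟨hbs, hs.2⟩)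

variable {p g q t : ℝ}

lemma left_endpoint (h : Sees f g t) (hg : g ∈ Ioo p q) (hf : ConvexOn ℝ (Icc p q) f)
    (hgt : g ≤ t) : Sees f p t := by
  have hpq : p < q := hg.1.trans hg.2
  rcases le_or_gt t q with htq | hqt
  · exact of_convexOn (hg.1.le.trans hgt) (hf.subset (Icc_subset_Icc_right htq) (convex_Icc p t))
  have hgt_lt : g < t := hg.2.trans hqt
  have hpg : Sees f p g :=
    of_convexOn hg.1.le (hf.subset (Icc_subset_Icc_right hg.2.le) (convex_Icc p g))
  have hpgq : BelowChord f p g q := (of_convexOn hpq.le hf).belowChord hpq (Ioo_subset_Icc_self hg)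
  have hgqt : BelowChord f g q t := h.belowChord hgt_lt ⟨hg.2.le, hqt.le⟩
  exact hpg.trans_of_belowChord hg.1 hgt_lt h (hpgq.extend_right hg.1.le hg.2 hqt.le hgqt)

lemma right_endpoint (h : Sees f g t) (hg : g ∈ Ioo p q) (hf : ConvexOn ℝ (Icc p q) f)
    (htg : t ≤ g) : Sees f q t := by
  have hpq : p < q := hg.1.trans hg.2
  refine symm ?_
  rcases le_or_gt p t with hpt | htp
  · exact of_convexOn (htg.trans hg.2.le) (hf.subset (Icc_subset_Icc_left hpt) (convex_Icc t q))
  have htg_lt : t < g := htp.trans hg.1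
  have hgq : Sees f g q :=
    of_convexOn hg.2.le (hf.subset (Icc_subset_Icc_left hg.1.le) (convex_Icc g q))
  have hpgq : BelowChord f p g q := (of_convexOn hpq.le hf).belowChord hpq (Ioo_subset_Icc_self hg)
  have htpg : BelowChord f t p g := h.symm.belowChord htg_lt ⟨htp.le, hg.1.le⟩
  exact h.symm.trans_of_belowChord htg_lt hg.2 hgq (htpg.extend_left htp.le hg.1 hg.2.le hpgq)

end Sees

lemma convexOn_of_eq_affine {s : Set ℝ} (hs : Convex ℝ s) (hf : ∀ t ∈ s, f t = a * t + b) :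
    ConvexOn ℝ s f :=
  (((LinearMap.mulLeft ℝ a).convexOn hs).add_const b).congr fun t ht => (hf t ht).symm

lemma mem_range_or_exists_mem_Ioo {α : Type*} [LinearOrder α] {n : ℕ} {x : Fin (n + 1) → α} {g : α}
    (hg : g ∈ Icc (x 0) (x (Fin.last n))) :
    g ∈ range x ∨ ∃ i : Fin n, g ∈ Ioo (x i.castSucc) (x i.succ) := by
  by_contra! ⟨hvertex, hedge⟩
  have hne (i) : x i ≠ g := fun h => hvertex ⟨i, h⟩
  have hlt (i) : x i < g := by
    induction i using Fin.induction with
    | zero => exact hg.1.lt_of_ne (hne 0)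
    | succ i ih => exact (not_lt.1 fun h => hedge i ⟨ih, h⟩).lt_of_ne (hne _)
  exact (hlt (Fin.last n)).not_ge hg.2

namespace PiecewiseConvexOn

lemma of_piecewise_affine {n : ℕ} {x : Fin (n + 1) → ℝ}
    (haff : ∀ i : Fin n, ∃ a b : ℝ, ∀ t ∈ Icc (x i.castSucc) (x i.succ), f t = a * t + b) :
    PiecewiseConvexOn (range x) (Icc (x 0) (x (Fin.last n))) f := by
  refine fun g hg => (mem_range_or_exists_mem_Ioo hg).imp_right ?_
  rintro ⟨i, hgi⟩
  obtain ⟨a, b, hf⟩ := haff i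
  exact ⟨_, mem_range_self _, _, mem_range_self _, hgi, convexOn_of_eq_affine (convex_Icc _ _) hf⟩

variable {V S : Set ℝ}

lemma exists_one_sided_guards (hf : PiecewiseConvexOn V S f) {g : ℝ} (hg : g ∈ S) :
    ∃ l ∈ V, ∃ r ∈ V, ∀ t ∉ V, Sees f g t →
      (l < t ∧ Sees f l t) ∨ (t < r ∧ Sees f r t) := by
  rcases hf g hg with hgV | ⟨p, hp, q, hq, hgpq, hconv⟩
  · refine ⟨g, hgV, g, hgV, fun t ht hsees => ?_⟩
    exact (ne_of_mem_of_not_mem hgV ht).lt_or_gt.imp (⟨·, hsees⟩) (⟨·, hsees⟩)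
  · refine ⟨p, hp, q, hq, fun t _ hsees => ?_⟩
    exact (le_total g t).imp
      (fun hgt => ⟨hgpq.1.trans_le hgt, hsees.left_endpoint hgpq hconv hgt⟩)
      (fun htg => ⟨htg.trans_lt hgpq.2, hsees.right_endpoint hgpq hconv htg⟩)

end PiecewiseConvexOn

theorem continuous_to_one_sided_vertex_guarding_general {V S T : Set ℝ}
    (hf : PiecewiseConvexOn V S f) (A : Finset ℝ) (hA : ∀ g ∈ A, g ∈ S)
    (hcov : ∀ t ∈ T, ∃ g ∈ A, Sees f g t) :
    ∃ A_L A_R : Finset ℝ,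
      (∀ v ∈ A_L, v ∈ V) ∧ (∀ v ∈ A_R, v ∈ V) ∧
      A_L.card + A_R.card ≤ 2 * A.card ∧
      ∀ t ∈ T, t ∉ V →
        (∃ v ∈ A_L, v < t ∧ Sees f v t) ∨ (∃ v ∈ A_R, t < v ∧ Sees f v t) := by
  choose! l hl r hr hsees using fun g (hg : g ∈ A) => hf.exists_one_sided_guards (hA g hg)
  refine ⟨A.image l, A.image r, Finset.forall_mem_image.2 hl, Finset.forall_mem_image.2 hr, ?_, ?_⟩
  · rw [two_mul]
    exact add_le_add Finset.card_image_le Finset.card_image_le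
  · intro t ht htV
    obtain ⟨g, hg, hgt⟩ := hcov t ht
    exact (hsees g hg t htV hgt).imp (⟨l g, Finset.mem_image_of_mem l hg, ·⟩)
      (⟨r g, Finset.mem_image_of_mem r hg, ·⟩)

end

/-- Reduction from continuous guarding to one-sided guarding at the vertices:
any continuous guarding set `A*` can be replaced by left and right guards on the
vertices, at most doubling the number of guards, so that every non-vertex point
of the terrain is seen from the left or from the right. -/
theorem continuous_to_one_sided_vertex_guarding {n : ℕ}
    (x : Fin (n + 1) → ℝ) (hx : StrictMono x) (f : ℝ → ℝ)
    (haff : ∀ i : Fin n, ∃ a b : ℝ,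
      ∀ t ∈ Set.Icc (x i.castSucc) (x i.succ), f t = a * t + b)
    (Astar : Finset ℝ)
    (hA : ∀ g ∈ Astar, g ∈ Set.Icc (x 0) (x (Fin.last n)))
    (hcov : ∀ t ∈ Set.Icc (x 0) (x (Fin.last n)), ∃ g ∈ Astar, Sees f g t) :
    ∃ A_L A_R : Finset ℝ,
      (∀ v ∈ A_L, ∃ i, x i = v) ∧ (∀ v ∈ A_R, ∃ i, x i = v) ∧
      A_L.card + A_R.card ≤ 2 * Astar.card ∧
      ∀ t ∈ Set.Icc (x 0) (x (Fin.last n)), (∀ i, x i ≠ t) →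
        (∃ v ∈ A_L, v < t ∧ Sees f v t) ∨ (∃ v ∈ A_R, t < v ∧ Sees f v t) := by
  simpa only [mem_range, not_exists] using continuous_to_one_sided_vertex_guarding_general
    (PiecewiseConvexOn.of_piecewise_affine haff) Astar hA hcov
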